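/- arXiv:1408.2245 — 2 statements merged into one kernel-verified Lean document; each statement's English description precedes it below -/
import Mathlib

section
/- For all x > -1/2, one has ψ'''(x + 1/2) > (160/3)·x·(6585600x⁸ + 15052800x⁶ + 11696160x⁴ + 1820960x² − 701703)/(560x⁴ + 520x² + 27)³. -/
open Real Filter Set

/-- The digamma function ψ(x) = Γ'(x)/Γ(x), as the derivative of log ∘ Γ. -/
noncomputable def digamma (x : ℝ) : ℝ := deriv (fun y : ℝ => Real.log (Real.Gamma y)) x

/-- L(x,a) = (1/(90a²+2))·ln(x²+x+(3a+1)/3) + (45a²/(90a²+2))·ln(x²+x+(15a−1)/(45a)). -/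
noncomputable def L (x a : ℝ) : ℝ :=
  (1 / (90 * a ^ 2 + 2)) * Real.log (x ^ 2 + x + (3 * a + 1) / 3) +
    (45 * a ^ 2 / (90 * a ^ 2 + 2)) * Real.log (x ^ 2 + x + (15 * a - 1) / (45 * a))

/-!
Away from the poles, `ψ'''(y) = 6 ∑ₙ 1 / (y + n) ^ 4`. The lower bound is a rational function `r`
that tends to `0` at infinity, so `r x` is the telescoping sum of `r (x + n) - r (x + n + 1)`, and
it is enough to compare the two series term by term. With `y = x + n + 1 / 2`, the difference
`6 / y ^ 4 - (r (y - 1 / 2) - r (y + 1 / 2))` has as its numerator a polynomial in `y ^ 2` which is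
positive on `[0, ∞)`.

The series comes from log-convexity of `Γ`, which gives `ψ(y) - log y → 0`; the functional equation
turns this into `ψ(y) - ψ(x) = ∑ₙ (1 / (x + n) - 1 / (y + n))`, which is differentiated termwise.
-/

open scoped Topology Nat

section NonPoles

variable {y : ℝ}

lemma ne_neg_natCast_of_pos (hy : 0 < y) (n : ℕ) : y ≠ -n :=
  ((neg_nonpos.mpr n.cast_nonneg).trans_lt hy).ne'

lemma add_natCast_ne_zero (hy : ∀ n : ℕ, y ≠ -n) (n : ℕ) : y + n ≠ 0 :=
  fun h ↦ hy n (eq_neg_of_add_eq_zero_left h)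

lemma add_natCast_ne_neg_natCast (hy : ∀ n : ℕ, y ≠ -n) (m n : ℕ) : y + m ≠ -n := by
  intro h
  apply hy (m + n)
  push_cast
  linarith

lemma isClosed_range_neg_natCast : IsClosed (range fun n : ℕ ↦ -(n : ℝ)) :=
  ((Homeomorph.neg ℝ).isClosedEmbedding.comp Nat.isClosedEmbedding_coe_real).isClosed_range

lemma exists_ball_abs_add_natCast_half_le (hy : ∀ n : ℕ, y ≠ -n) :
    ∃ δ > 0, ∀ z ∈ Metric.ball y δ, ∀ n : ℕ, |y + n| / 2 ≤ |z + n| := by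
  have hmem : y ∈ (range fun n : ℕ ↦ -(n : ℝ))ᶜ := by
    rintro ⟨n, hn⟩
    exact hy n hn.symm
  obtain ⟨ε, hε, hball⟩ := Metric.isOpen_iff.mp isClosed_range_neg_natCast.isOpen_compl y hmem
  refine ⟨ε / 2, half_pos hε, fun z hz n ↦ ?_⟩
  have hfar : ε ≤ |y + n| := by
    by_contra! hlt
    refine hball (Metric.mem_ball'.mpr ?_) ⟨n, rfl⟩
    rwa [Real.dist_eq, sub_neg_eq_add]
  have hclose : |y - z| < ε / 2 := by rwa [← Real.dist_eq, dist_comm]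
  have htri : |y + n| ≤ |y - z| + |z + n| := by
    calc |y + n| = |(y - z) + (z + n)| := by ring_nf
      _ ≤ |y - z| + |z + n| := abs_add_le _ _
  linarith

lemma eventually_ne_neg_natCast (hy : ∀ n : ℕ, y ≠ -n) : ∀ᶠ z in 𝓝 y, ∀ n : ℕ, z ≠ -(n : ℝ) := by
  filter_upwards [isClosed_range_neg_natCast.isOpen_compl.mem_nhds fun ⟨n, hn⟩ ↦ hy n hn.symm]
    with z hz n hn
  exact hz ⟨n, hn.symm⟩

end NonPoles

section Series

variable {x y : ℝ} {k : ℕ}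

lemma summable_one_div_add_natCast_pow (y : ℝ) (hk : 1 < k) :
    Summable fun n : ℕ ↦ 1 / (y + n) ^ k := by
  refine Summable.of_norm ?_
  simpa [add_comm] using (Real.summable_one_div_nat_add_rpow y k).mpr (by exact_mod_cast hk)

lemma summable_one_div_add_natCast_sub (hx : ∀ n : ℕ, x ≠ -n) (hy : ∀ n : ℕ, y ≠ -n) :
    Summable fun n : ℕ ↦ 1 / (x + n) - 1 / (y + n) := by
  refine Summable.of_norm_bounded
    (((summable_one_div_add_natCast_pow x one_lt_two).add
      (summable_one_div_add_natCast_pow y one_lt_two)).mul_left |y - x|) fun n ↦ ?_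
  have habs (a b : ℝ) : |a * b| ≤ a ^ 2 + b ^ 2 :=
    abs_le.mpr ⟨by nlinarith [sq_nonneg (a + b)], by nlinarith [sq_nonneg (a - b)]⟩
  have hprod : 1 / (x + n) - 1 / (y + n) = (y - x) * (1 / (x + n) * (1 / (y + n))) := by
    have := add_natCast_ne_zero hx n
    have := add_natCast_ne_zero hy n
    field_simp
    ring
  rw [hprod, Real.norm_eq_abs, abs_mul, ← one_div_pow, ← one_div_pow]
  gcongr
  exact habs _ _

lemma hasDerivAt_one_div_pow (k : ℕ) (hx : x ≠ 0) :
    HasDerivAt (fun z : ℝ ↦ 1 / z ^ k) (-(k * (1 / x ^ (k + 1)))) x := by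
  have h := hasDerivAt_zpow (-k : ℤ) x (Or.inl hx)
  have hexp : (-k - 1 : ℤ) = -(k + 1 : ℕ) := by
    push_cast
    ring
  simpa only [hexp, zpow_neg, zpow_natCast, Int.cast_neg, Int.cast_natCast, neg_mul,
    ← one_div] using h

/-- The constants `c n` are there for `k = 1`, where the series diverges without them. -/
lemma hasDerivAt_tsum_sub_one_div_add_natCast_pow {c : ℕ → ℝ} (hk : 1 ≤ k)
    (hy : ∀ n : ℕ, y ≠ -n) (hc : Summable fun n : ℕ ↦ c n - 1 / (y + n) ^ k) :
    HasDerivAt (fun z : ℝ ↦ ∑' n : ℕ, (c n - 1 / (z + n) ^ k))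
      (k * ∑' n : ℕ, 1 / (y + n) ^ (k + 1)) y := by
  obtain ⟨δ, hδ, hfar⟩ := exists_ball_abs_add_natCast_half_le hy
  have hpos (n : ℕ) : 0 < |y + n| / 2 := half_pos (abs_pos.mpr (add_natCast_ne_zero hy n))
  have hbound : Summable fun n : ℕ ↦ k * (1 / (|y + n| / 2) ^ (k + 1)) := by
    have := ((summable_one_div_add_natCast_pow y (Nat.lt_add_one_of_le hk)).norm).mul_left
      (k * 2 ^ (k + 1) : ℝ)
    refine this.congr fun n ↦ ?_
    rw [norm_div, norm_one, norm_pow, Real.norm_eq_abs, div_pow]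
    field_simp
  rw [← tsum_mul_left]
  refine hasDerivAt_tsum_of_isPreconnected (t := Metric.ball y δ) (y₀ := y)
    (g := fun (n : ℕ) z ↦ c n - 1 / (z + n) ^ k)
    (g' := fun (n : ℕ) z ↦ k * (1 / (z + n) ^ (k + 1))) hbound Metric.isOpen_ball
    (convex_ball y δ).isPreconnected (fun n z hz ↦ ?_) (fun n z hz ↦ ?_)
    (Metric.mem_ball_self hδ) hc (Metric.mem_ball_self hδ)
  · have hz0 : z + n ≠ 0 := abs_pos.mp ((hpos n).trans_le (hfar z hz n))
    simpa using ((hasDerivAt_one_div_pow k hz0).comp_add_const z n).const_sub (c n)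
  · have := hpos n
    rw [norm_mul, norm_div, norm_pow, norm_one, Real.norm_eq_abs, Real.norm_eq_abs, Nat.abs_cast]
    gcongr
    exact hfar z hz n

lemma hasDerivAt_tsum_one_div_add_natCast_pow (hk : 1 < k) (hy : ∀ n : ℕ, y ≠ -n) :
    HasDerivAt (fun z : ℝ ↦ ∑' n : ℕ, 1 / (z + n) ^ k)
      (-(k * ∑' n : ℕ, 1 / (y + n) ^ (k + 1)) : ℝ) y := by
  have hc : Summable fun n : ℕ ↦ (0 : ℝ) - 1 / (y + n) ^ k := by
    simpa only [zero_sub] using (summable_one_div_add_natCast_pow y hk).neg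
  simpa only [zero_sub, tsum_neg, neg_neg, Pi.neg_def] using
    (hasDerivAt_tsum_sub_one_div_add_natCast_pow hk.le hy hc).neg

lemma lt_tsum_of_sub_succ_lt {f g : ℕ → ℝ} (hf : Summable f) (hg : Tendsto g atTop (𝓝 0))
    (hlt : ∀ n, g n - g (n + 1) < f n) : g 0 < ∑' n, f n := by
  have hpos (n : ℕ) : 0 < f n - (g n - g (n + 1)) := sub_pos.mpr (hlt n)
  have hsum : HasSum (fun n ↦ f n - (g n - g (n + 1))) (∑' n, f n - g 0) := by
    rw [hasSum_iff_tendsto_nat_of_nonneg fun n ↦ (hpos n).le]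
    simpa only [Finset.sum_sub_distrib f, Finset.sum_range_sub', sub_zero] using
      hf.hasSum.tendsto_sum_nat.sub (hg.const_sub (g 0))
  have := hsum.summable.tsum_pos (fun n ↦ (hpos n).le) 0 (hpos 0)
  rw [hsum.tsum_eq] at this
  exact sub_pos.mp this

end Series

section Digamma

variable {x y : ℝ}

lemma differentiableAt_log_Gamma (hy : ∀ n : ℕ, y ≠ -n) :
    DifferentiableAt ℝ (log ∘ Gamma) y :=
  (differentiableAt_Gamma hy).log (Gamma_ne_zero hy)

lemma digamma_eq_logDeriv_Gamma (hy : ∀ n : ℕ, y ≠ -n) : digamma y = logDeriv Gamma y :=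
  deriv_log_comp_eq_logDeriv (differentiableAt_Gamma hy) (Gamma_ne_zero hy)

lemma digamma_add_one (hy : ∀ n : ℕ, y ≠ -n) : digamma (y + 1) = digamma y + 1 / y := by
  have hy0 : y ≠ 0 := by simpa using hy 0
  have hshift : (fun z ↦ Gamma (z + 1)) =ᶠ[𝓝 y] fun z ↦ z * Gamma z := by
    filter_upwards [eventually_ne_nhds hy0] with z hz using Gamma_add_one hz
  calc digamma (y + 1)
      = logDeriv (fun z ↦ Gamma (z + 1)) y := by
        rw [digamma_eq_logDeriv_Gamma (by simpa using add_natCast_ne_neg_natCast hy 1),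
          logDeriv_apply, logDeriv_apply, deriv_comp_add_const]
    _ = logDeriv (fun z ↦ z * Gamma z) y := (logDeriv_congr_nhds hshift).eq_of_nhds
    _ = logDeriv (fun z ↦ z) y + logDeriv Gamma y :=
        logDeriv_mul y hy0 (Gamma_ne_zero hy) differentiableAt_id (differentiableAt_Gamma hy)
    _ = digamma y + 1 / y := by rw [logDeriv_id', digamma_eq_logDeriv_Gamma hy, add_comm]

lemma digamma_add_natCast (hy : ∀ n : ℕ, y ≠ -n) (m : ℕ) :
    digamma (y + m) = digamma y + ∑ n ∈ Finset.range m, 1 / (y + n) := by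
  induction m with
  | zero => simp
  | succ m ih =>
    rw [Nat.cast_succ, ← add_assoc, digamma_add_one (add_natCast_ne_neg_natCast hy m), ih,
      Finset.sum_range_succ, add_assoc]

lemma slope_log_Gamma_add_one (hy : 0 < y) : slope (log ∘ Gamma) y (y + 1) = log y := by
  rw [slope_def_field, Function.comp_apply, Function.comp_apply, Gamma_add_one hy.ne',
    log_mul hy.ne' (Gamma_pos_of_pos hy).ne']
  ring

lemma digamma_le_log (hy : 0 < y) : digamma y ≤ log y := by
  rw [← slope_log_Gamma_add_one hy]
  exact convexOn_log_Gamma.deriv_le_slope hy (mem_Ioi.mpr (by positivity)) (lt_add_one y)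
    (differentiableAt_log_Gamma (ne_neg_natCast_of_pos hy))

lemma log_le_digamma_add_one (hy : 0 < y) : log y ≤ digamma (y + 1) := by
  have hy1 : 0 < y + 1 := by positivity
  rw [← slope_log_Gamma_add_one hy]
  exact convexOn_log_Gamma.slope_le_deriv hy hy1 (lt_add_one y)
    (differentiableAt_log_Gamma (ne_neg_natCast_of_pos hy1))

lemma tendsto_digamma_sub_log : Tendsto (fun y ↦ digamma y - log y) atTop (𝓝 0) := by
  have hinv : Tendsto (fun y : ℝ ↦ -(1 / y)) atTop (𝓝 0) := by
    simpa only [one_div, neg_zero] using (tendsto_inv_atTop_zero (𝕜 := ℝ)).neg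
  refine tendsto_of_tendsto_of_tendsto_of_le_of_le' hinv tendsto_const_nhds ?_ ?_
  · filter_upwards [eventually_gt_atTop 0] with y hy
    linarith [log_le_digamma_add_one hy, digamma_add_one (ne_neg_natCast_of_pos hy)]
  · filter_upwards [eventually_gt_atTop 0] with y hy
    exact sub_nonpos.mpr (digamma_le_log hy)

lemma tendsto_digamma_add_natCast_sub_log (y : ℝ) :
    Tendsto (fun n : ℕ ↦ digamma (y + n) - log n) atTop (𝓝 0) := by
  have hdigamma := tendsto_digamma_sub_log.comp
    (tendsto_atTop_add_const_left _ y tendsto_natCast_atTop_atTop)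
  have hlog := (tendsto_log_comp_add_sub_log y).comp tendsto_natCast_atTop_atTop
  simpa [Function.comp_def, add_comm] using hdigamma.add hlog

lemma hasSum_one_div_add_natCast_sub (hx : ∀ n : ℕ, x ≠ -n) (hy : ∀ n : ℕ, y ≠ -n) :
    HasSum (fun n : ℕ ↦ 1 / (x + n) - 1 / (y + n)) (digamma y - digamma x) := by
  rw [(summable_one_div_add_natCast_sub hx hy).hasSum_iff_tendsto_nat]
  have hlim := ((tendsto_digamma_add_natCast_sub_log x).sub
    (tendsto_digamma_add_natCast_sub_log y)).const_add (digamma y - digamma x)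
  rw [sub_zero, add_zero] at hlim
  refine hlim.congr fun m ↦ ?_
  rw [digamma_add_natCast hx, digamma_add_natCast hy, Finset.sum_sub_distrib]
  ring

lemma hasDerivAt_digamma (hy : ∀ n : ℕ, y ≠ -n) :
    HasDerivAt digamma (∑' n : ℕ, 1 / (y + n) ^ 2) y := by
  have hseries : digamma =ᶠ[𝓝 y]
      fun z ↦ digamma y + ∑' n : ℕ, (1 / (y + n) - 1 / (z + n) ^ 1) := by
    filter_upwards [eventually_ne_neg_natCast hy] with z hz
    simp only [pow_one, (hasSum_one_div_add_natCast_sub hy hz).tsum_eq, add_sub_cancel]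
  have hc : Summable fun n : ℕ ↦ 1 / (y + n) - 1 / (y + n) ^ 1 := by
    simpa only [pow_one] using summable_one_div_add_natCast_sub hy hy
  simpa only [Nat.cast_one, one_mul] using
    ((hasDerivAt_tsum_sub_one_div_add_natCast_pow le_rfl hy hc).const_add
      (digamma y)).congr_of_eventuallyEq hseries

theorem iteratedDeriv_succ_digamma (k : ℕ) (hy : ∀ n : ℕ, y ≠ -n) :
    iteratedDeriv (k + 1) digamma y =
      (-1) ^ k * (k + 1)! * ∑' n : ℕ, 1 / (y + n) ^ (k + 2) := by
  induction k generalizing y with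
  | zero => simpa using (hasDerivAt_digamma hy).deriv
  | succ k ih =>
    have hformula : iteratedDeriv (k + 1) digamma =ᶠ[𝓝 y]
        fun z ↦ (-1) ^ k * (k + 1)! * ∑' n : ℕ, 1 / (z + n) ^ (k + 2) := by
      filter_upwards [eventually_ne_neg_natCast hy] with z hz using ih hz
    have hderiv := (hasDerivAt_tsum_one_div_add_natCast_pow (k := k + 2) (by lia) hy).const_mul
      ((-1) ^ k * (k + 1)! : ℝ)
    rw [iteratedDeriv_succ, hformula.deriv_eq, hderiv.deriv, Nat.factorial_succ (k + 1)]
    push_cast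
    ring

end Digamma

section RationalBound

/-- The rational lower bound for the pentagamma function `ψ'''` at `x + 1 / 2`. It is the third
derivative of `x ↦ L (x - 1 / 2) a` when `a - 1 / (45 * a) = 16 / 21`. -/
noncomputable def pentagammaApprox (x : ℝ) : ℝ :=
  (160 / 3) * x *
    (6585600 * x ^ 8 + 15052800 * x ^ 6 + 11696160 * x ^ 4 + 1820960 * x ^ 2 - 701703) /
    (560 * x ^ 4 + 520 * x ^ 2 + 27) ^ 3

lemma tendsto_pentagammaApprox_atTop : Tendsto pentagammaApprox atTop (𝓝 0) := by
  let reflected (u : ℝ) : ℝ := (160 / 3) * u ^ 3 *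
    (6585600 + 15052800 * u ^ 2 + 11696160 * u ^ 4 + 1820960 * u ^ 6 - 701703 * u ^ 8) /
    (560 + 520 * u ^ 2 + 27 * u ^ 4) ^ 3
  have hcont : Continuous reflected := by
    refine Continuous.div (by fun_prop) (by fun_prop) fun u ↦ ?_
    positivity
  have hlim : Tendsto (fun x : ℝ ↦ reflected x⁻¹) atTop (𝓝 0) := by
    simpa [reflected, Function.comp_def] using (hcont.tendsto 0).comp tendsto_inv_atTop_zero
  refine hlim.congr' ?_
  filter_upwards [eventually_gt_atTop 0] with x hx
  simp only [reflected, pentagammaApprox]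
  field_simp

/-- The numerator of `6 / y ^ 4 - (pentagammaApprox (y - 1 / 2) - pentagammaApprox (y + 1 / 2))` as
a polynomial in `t = y ^ 2`, up to a constant factor. -/
def gapNumerator (t : ℝ) : ℝ :=
  62208 - 596160 * t + 3342880 * t ^ 2 - 12773700 * t ^ 3 + 8270325 * t ^ 4 + 42925750 * t ^ 5 +
    117967500 * t ^ 6 + 111903750 * t ^ 7 + 82534375 * t ^ 8

lemma gapNumerator_pos {t : ℝ} (ht : 0 ≤ t) : 0 < gapNumerator t := by
  -- The quartic has its minimum over `[0, ∞)` near `t = 1 / 5`, hence the squares vanishing there.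
  have hquartic : 0 < 1914580 - 12773700 * t + 8270325 * t ^ 2 + 42925750 * t ^ 3 +
      117967500 * t ^ 4 := by
    nlinarith [mul_nonneg ht (sq_nonneg (5 * t - 1)), sq_nonneg (t * (5 * t - 1)),
      sq_nonneg (24 * t - 5)]
  have hsplit : gapNumerator t = 62208 * (1 - 115 / 24 * t) ^ 2 +
      t ^ 2 * (1914580 - 12773700 * t + 8270325 * t ^ 2 + 42925750 * t ^ 3 + 117967500 * t ^ 4) +
      (111903750 * t ^ 7 + 82534375 * t ^ 8) := by
    unfold gapNumerator
    ring
  rcases ht.eq_or_lt with rfl | ht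
  · norm_num [gapNumerator]
  · rw [hsplit]
    positivity

lemma six_div_pow_four_sub_pentagammaApprox_sub {y : ℝ} (hy : y ≠ 0) :
    6 / y ^ 4 - (pentagammaApprox (y - 1 / 2) - pentagammaApprox (y + 1 / 2)) =
      2 ^ 29 * 9 * gapNumerator (y ^ 2) /
        (y ^ 4 * (560 * (y - 1 / 2) ^ 4 + 520 * (y - 1 / 2) ^ 2 + 27) ^ 3 *
          (560 * (y + 1 / 2) ^ 4 + 520 * (y + 1 / 2) ^ 2 + 27) ^ 3) := by
  have hleft : 560 * (y - 1 / 2) ^ 4 + 520 * (y - 1 / 2) ^ 2 + 27 ≠ 0 := by positivity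
  have hright : 560 * (y + 1 / 2) ^ 4 + 520 * (y + 1 / 2) ^ 2 + 27 ≠ 0 := by positivity
  unfold pentagammaApprox gapNumerator
  rw [div_sub_div _ _ (pow_ne_zero 3 hleft) (pow_ne_zero 3 hright),
    div_sub_div _ _ (pow_ne_zero 4 hy) (by positivity), div_eq_div_iff (by positivity)
    (by positivity)]
  ring

lemma pentagammaApprox_sub_lt {y : ℝ} (hy : y ≠ 0) :
    pentagammaApprox (y - 1 / 2) - pentagammaApprox (y + 1 / 2) < 6 / y ^ 4 := by
  have := gapNumerator_pos (sq_nonneg y)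
  rw [← sub_pos, six_div_pow_four_sub_pentagammaApprox_sub hy]
  positivity

lemma pentagammaApprox_lt_tsum {x : ℝ} (hx : ∀ n : ℕ, x + 1 / 2 ≠ -n) :
    pentagammaApprox x < 6 * ∑' n : ℕ, 1 / (x + 1 / 2 + n) ^ 4 := by
  have hterms : Summable fun n : ℕ ↦ 6 * (1 / (x + 1 / 2 + n) ^ 4) :=
    (summable_one_div_add_natCast_pow _ (by norm_num)).mul_left 6
  have hlim : Tendsto (fun n : ℕ ↦ pentagammaApprox (x + n)) atTop (𝓝 0) :=
    tendsto_pentagammaApprox_atTop.comp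
      (tendsto_atTop_add_const_left _ x tendsto_natCast_atTop_atTop)
  rw [← tsum_mul_left]
  simpa using lt_tsum_of_sub_succ_lt hterms hlim fun n ↦ by
    convert pentagammaApprox_sub_lt (add_natCast_ne_zero hx n) using 3 <;> push_cast <;> ring

end RationalBound

theorem stmt_6_general (x : ℝ) (hx : ∀ n : ℕ, x + 1 / 2 ≠ -n) :
    iteratedDeriv 3 digamma (x + 1 / 2) >
      (160 / 3) * x *
        (6585600 * x ^ 8 + 15052800 * x ^ 6 + 11696160 * x ^ 4 + 1820960 * x ^ 2 - 701703) /
        (560 * x ^ 4 + 520 * x ^ 2 + 27) ^ 3 :=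
  calc iteratedDeriv 3 digamma (x + 1 / 2)
      = 6 * ∑' n : ℕ, 1 / (x + 1 / 2 + n) ^ 4 := by
        rw [iteratedDeriv_succ_digamma 2 hx]
        norm_num [Nat.factorial]
    _ > pentagammaApprox x := pentagammaApprox_lt_tsum hx

/-- For all x > −1/2, ψ'''(x + 1/2) > (160/3)·x·(6585600x⁸ + 15052800x⁶ + 11696160x⁴ + 1820960x² − 701703)/(560x⁴ + 520x² + 27)³. -/
theorem stmt_6 (x : ℝ) (hx : -(1 / 2) < x) :
    iteratedDeriv 3 digamma (x + 1 / 2) >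
      (160 / 3) * x *
        (6585600 * x ^ 8 + 15052800 * x ^ 6 + 11696160 * x ^ 4 + 1820960 * x ^ 2 - 701703) /
        (560 * x ^ 4 + 520 * x ^ 2 + 27) ^ 3 :=
  stmt_6_general x (ne_neg_natCast_of_pos (by linarith))
end

section
/- Let a > 1/15. The function F_a is strictly increasing and strictly concave on (0, ∞) if and only if a ≥ a₁, where a₁ = (40 + 3√205)/105. -/
open Real Filter Set

/-!
Write `Δ` for the forward difference `F(x + 1) - F(x)` of `F = F_a`. Since
`ψ(x + 2) - ψ(x + 1) = 1 / (x + 1)`, the derivative of `Δ` is a rational function, and the constants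
in `L` are tuned so that it collapses: with `σ = a - 1 / (45 a)`,
`Δ'(x) = -((21 σ - 16) / 135 * (x + 1)² + ((15 σ + 4) / 45)²) / ((x + 1)² Q(x) Q(x + 1))`
for a positive increasing quartic `Q`, while `a ≥ a₁` means exactly `σ ≥ 16 / 21`.

If `σ ≥ 16 / 21`, then `Δ'` is increasing, so `Δ` is strictly convex. As `F` tends to `0`,
`F(x) = -∑ Δ(x + n)` is strictly concave, and a strictly concave function with a finite limit is
strictly increasing. If `σ < 16 / 21`, then `Δ'` is eventually positive, so `Δ` increases strictly
to its limit `0`; it is eventually negative and `F` is not eventually monotone.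
-/

open scoped Topology

section ConvexityAtInfinity

variable {f : ℝ → ℝ} {M : ℝ}

lemma strictMonoOn_of_strictConcaveOn_of_not_tendsto_atBot (hf : StrictConcaveOn ℝ (Ioi M) f)
    (hbot : ¬ Tendsto f atTop atBot) : StrictMonoOn f (Ioi M) := by
  intro x hx y hy hxy
  contrapose! hbot with hyx
  have hy1 : y + 1 ∈ Ioi M := lt_trans hy (lt_add_one y)
  have slope_neg : f (y + 1) - f y < 0 := by
    have hslope := hf.slope_anti_adjacent hx hy1 hxy (lt_add_one y)
    rw [add_sub_cancel_left, div_one] at hslope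
    exact hslope.trans_le (div_nonpos_of_nonpos_of_nonneg (by linarith) (by linarith))
  have chord_tendsto :
      Tendsto (fun z => f (y + 1) + (f (y + 1) - f y) * (z - (y + 1))) atTop atBot :=
    tendsto_atBot_add_const_left _ _
      ((tendsto_atTop_add_const_right _ _ tendsto_id).const_mul_atTop_of_neg slope_neg)
  refine tendsto_atBot_mono' _ ?_ chord_tendsto
  filter_upwards [eventually_gt_atTop (y + 1)] with z hz
  have hslope := hf.concaveOn.slope_anti_adjacent hy (hy1.trans hz) (lt_add_one y) hz
  rw [add_sub_cancel_left, div_one, div_le_iff₀ (by linarith)] at hslope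
  linarith

lemma convexOn_Ioi_comp_add_right {c : ℝ} (hf : ConvexOn ℝ (Ioi M) f) (hc : 0 ≤ c) :
    ConvexOn ℝ (Ioi M) (fun x => f (x + c)) :=
  (hf.translate_left c).subset (fun x (hx : M < x) => show M < c + x by linarith) (convex_Ioi M)

variable {h l : ℝ}

lemma concaveOn_sub_comp_add_nat_mul (hh : 0 ≤ h) (hf : ConvexOn ℝ (Ioi M) (fwdDiff h f)) (n : ℕ) :
    ConcaveOn ℝ (Ioi M) (fun x => f x - f (x + n * h)) := by
  induction n with
  | zero => simpa using concaveOn_const (0 : ℝ) (convex_Ioi M)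
  | succ n ih =>
    refine (ih.sub (convexOn_Ioi_comp_add_right hf (by positivity : 0 ≤ n * h))).congr ?_
    intro x _
    simp only [Pi.sub_apply, fwdDiff, Nat.cast_succ, add_mul, one_mul, add_assoc]
    ring

lemma concaveOn_of_convexOn_fwdDiff (hh : 0 < h) (hlim : Tendsto f atTop (𝓝 l))
    (hf : ConvexOn ℝ (Ioi M) (fwdDiff h f)) : ConcaveOn ℝ (Ioi M) f := by
  have hshift (x : ℝ) : Tendsto (fun n : ℕ => f x - f (x + n * h)) atTop (𝓝 (f x - l)) :=
    (hlim.comp (tendsto_atTop_add_const_left _ _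
      (tendsto_natCast_atTop_atTop.atTop_mul_const hh))).const_sub (f x)
  have hconc : ConcaveOn ℝ (Ioi M) (fun x => f x - l) :=
    isClosed_setOfPred_concaveOn.mem_of_tendsto (tendsto_pi_nhds.2 hshift)
      (Eventually.of_forall (concaveOn_sub_comp_add_nat_mul hh.le hf))
  exact (hconc.add_const l).congr fun x _ => sub_add_cancel (f x) l

lemma strictConcaveOn_of_strictConvexOn_fwdDiff (hh : 0 < h) (hlim : Tendsto f atTop (𝓝 l))
    (hf : StrictConvexOn ℝ (Ioi M) (fwdDiff h f)) : StrictConcaveOn ℝ (Ioi M) f := by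
  have hconc := concaveOn_of_convexOn_fwdDiff hh hlim hf.convexOn
  have hshift : ConcaveOn ℝ (Ioi M) (fun x => f (x + h)) :=
    neg_convexOn_iff.1 (convexOn_Ioi_comp_add_right hconc.neg hh.le)
  refine (hshift.sub_strictConvexOn hf).congr fun x _ => ?_
  simp [fwdDiff]

end ConvexityAtInfinity

lemma lt_of_strictMonoOn_Ioi_of_tendsto {α β : Type*} [LinearOrder α] [NoMaxOrder α]
    [LinearOrder β] [TopologicalSpace β] [OrderClosedTopology β] {f : α → β} {M x : α} {l : β}
    (hf : StrictMonoOn f (Ioi M)) (hlim : Tendsto f atTop (𝓝 l)) (hx : M < x) : f x < l := by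
  have : Nonempty α := ⟨x⟩
  obtain ⟨y, hxy⟩ := exists_gt x
  refine (hf hx (hx.trans hxy) hxy).trans_le (ge_of_tendsto hlim ?_)
  filter_upwards [eventually_ge_atTop y] with z hz
  exact hf.monotoneOn (hx.trans hxy) ((hx.trans hxy).trans_le hz) hz

section Digamma

variable {x : ℝ}

lemma differentiableAt_log_Gamma_s7 (hx : 0 < x) :
    DifferentiableAt ℝ (fun y => Real.log (Real.Gamma y)) x :=
  (Real.differentiableOn_Gamma_Ioi.differentiableAt (Ioi_mem_nhds hx)).log
    (Real.Gamma_pos_of_pos hx).ne'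

lemma log_Gamma_add_one (hx : 0 < x) :
    Real.log (Real.Gamma (x + 1)) = Real.log x + Real.log (Real.Gamma x) := by
  rw [Real.Gamma_add_one hx.ne', Real.log_mul hx.ne' (Real.Gamma_pos_of_pos hx).ne']

lemma digamma_add_one_s7 (hx : 0 < x) : digamma (x + 1) = digamma x + x⁻¹ := by
  have hleft : HasDerivAt (fun y => Real.log (Real.Gamma (y + 1))) (digamma (x + 1)) x :=
    (differentiableAt_log_Gamma_s7 (by linarith)).hasDerivAt.comp_add_const x 1
  have hright :
      HasDerivAt (fun y => Real.log y + Real.log (Real.Gamma y)) (x⁻¹ + digamma x) x :=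
    (Real.hasDerivAt_log hx.ne').add (differentiableAt_log_Gamma_s7 hx).hasDerivAt
  have heq : (fun y => Real.log (Real.Gamma (y + 1))) =ᶠ[𝓝 x]
      fun y => Real.log y + Real.log (Real.Gamma y) := by
    filter_upwards [lt_mem_nhds hx] with y hy using log_Gamma_add_one hy
  rw [hleft.unique (hright.congr_of_eventuallyEq heq), add_comm]

lemma slope_log_Gamma_add_one_s7 (hx : 0 < x) :
    slope (Real.log ∘ Real.Gamma) x (x + 1) = Real.log x := by
  simp [slope_def_field, log_Gamma_add_one hx]

lemma digamma_le_log_s7 (hx : 0 < x) : digamma x ≤ Real.log x :=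
  slope_log_Gamma_add_one_s7 hx ▸ Real.convexOn_log_Gamma.deriv_le_slope hx
    (show 0 < x + 1 by linarith) (lt_add_one x) (differentiableAt_log_Gamma_s7 hx)

lemma log_le_digamma_add_one_s7 (hx : 0 < x) : Real.log x ≤ digamma (x + 1) :=
  slope_log_Gamma_add_one_s7 hx ▸ Real.convexOn_log_Gamma.slope_le_deriv hx
    (show 0 < x + 1 by linarith) (lt_add_one x) (differentiableAt_log_Gamma_s7 (by linarith))

lemma tendsto_digamma_add_one_sub_log :
    Tendsto (fun x => digamma (x + 1) - Real.log x) atTop (𝓝 0) := by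
  refine tendsto_of_tendsto_of_tendsto_of_le_of_le' tendsto_const_nhds
    (Real.tendsto_log_comp_add_sub_log 1) ?_ ?_
  · filter_upwards [eventually_gt_atTop 0] with x hx
    exact sub_nonneg.2 (log_le_digamma_add_one_s7 hx)
  · filter_upwards [eventually_gt_atTop 0] with x hx
    exact sub_le_sub_right (digamma_le_log_s7 (by linarith)) _

end Digamma

lemma tendsto_log_quadratic_sub_two_mul_log (b c : ℝ) :
    Tendsto (fun x => Real.log (x ^ 2 + b * x + c) - 2 * Real.log x) atTop (𝓝 0) := by
  have hquot : Tendsto (fun x : ℝ => 1 + b * x⁻¹ + c * x⁻¹ ^ 2) atTop (𝓝 1) := by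
    have hinv := tendsto_inv_atTop_zero (𝕜 := ℝ)
    simpa using ((hinv.const_mul b).const_add 1).add ((hinv.pow 2).const_mul c)
  have hlog := hquot.log one_ne_zero
  rw [Real.log_one] at hlog
  refine hlog.congr' ?_
  filter_upwards [eventually_gt_atTop 0, hquot.eventually_ne one_ne_zero] with x hx hne
  have hfactor : x ^ 2 + b * x + c = x ^ 2 * (1 + b * x⁻¹ + c * x⁻¹ ^ 2) := by field_simp
  rw [hfactor, Real.log_mul (by positivity) hne, Real.log_pow]
  ring

lemma hasDerivAt_log_sq_add_self_add {c x : ℝ} (hx : x ^ 2 + x + c ≠ 0) :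
    HasDerivAt (fun y => Real.log (y ^ 2 + y + c)) ((2 * x + 1) / (x ^ 2 + x + c)) x := by
  have hquad : HasDerivAt (fun y : ℝ => y ^ 2 + y + c) (2 * x + 1) x := by
    simpa using (((hasDerivAt_id x).pow 2).add (hasDerivAt_id x)).add_const c
  exact hquad.log hx

/-- The parameter `σ = a - 1 / (45 a)`. Exchanging `a` with `-1 / (45 a)` exchanges the two terms
of `L`, so the derivative of `L` depends on `a` only through `σ`. -/
noncomputable def sigma (a : ℝ) : ℝ := a - 1 / (45 * a)

/-- The product of the two quadratics inside the logarithms of `L`, in terms of `σ`. -/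
noncomputable def quadraticsProd (σ x : ℝ) : ℝ :=
  (x ^ 2 + x) ^ 2 + (σ + 2 / 3) * (x ^ 2 + x) + (15 * σ + 4) / 45

/-- The derivative of `L` in `x`, in terms of `σ`. -/
noncomputable def derivL (σ x : ℝ) : ℝ :=
  (x + 1 / 2) * (x ^ 2 + x + σ + 1 / 3) / quadraticsProd σ x

/-- Minus the derivative of the forward difference of `ψ(x + 1) - L(x, a)`, in terms of `σ`. -/
noncomputable def fwdDiffDecay (σ x : ℝ) : ℝ :=
  ((21 * σ - 16) / 135 * (x + 1) ^ 2 + ((15 * σ + 4) / 45) ^ 2) /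
    ((x + 1) ^ 2 * (quadraticsProd σ x * quadraticsProd σ (x + 1)))

/-- The error `F_a(x) = ψ(x + 1) - L(x, a)` of the approximation `L`. -/
noncomputable def digammaError (a x : ℝ) : ℝ := digamma (x + 1) - L x a

section Sigma

variable {a : ℝ}

lemma neg_four_div_fifteen_le_sigma (ha : 1 / 15 ≤ a) : -4 / 15 ≤ sigma a := by
  have hinv : 1 / (45 * a) ≤ 1 / 3 := one_div_le_one_div_of_le (by norm_num) (by linarith)
  rw [sigma]
  linarith

lemma threshold_le_iff_le_sigma (ha : 0 < a) :
    (40 + 3 * Real.sqrt 205) / 105 ≤ a ↔ 16 / 21 ≤ sigma a := by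
  have hroots : sigma a - 16 / 21 = (105 * a - 40 - 3 * Real.sqrt 205) *
      (105 * a - 40 + 3 * Real.sqrt 205) / (11025 * a) := by
    have hsq : Real.sqrt 205 ^ 2 = 205 := Real.sq_sqrt (by norm_num)
    rw [sigma]
    field_simp
    linear_combination 8505 * hsq
  have hpos : 0 < 105 * a - 40 + 3 * Real.sqrt 205 := by
    have hsqrt : 14 ≤ Real.sqrt 205 := Real.le_sqrt_of_sq_le (by norm_num)
    linarith
  rw [← sub_nonneg (b := (16 / 21 : ℝ)), hroots, le_div_iff₀ (by positivity), zero_mul,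
    mul_nonneg_iff_of_pos_right hpos, div_le_iff₀ (by norm_num), sub_sub, sub_nonneg, mul_comm a]

end Sigma

section QuadraticsProd

variable {σ : ℝ}

lemma quadraticsProd_sigma {a : ℝ} (ha : a ≠ 0) (x : ℝ) :
    quadraticsProd (sigma a) x =
      (x ^ 2 + x + (3 * a + 1) / 3) * (x ^ 2 + x + (15 * a - 1) / (45 * a)) := by
  rw [quadraticsProd, sigma]
  field_simp
  ring

lemma quadraticsProd_pos {x : ℝ} (hσ : -4 / 15 ≤ σ) (hx : 0 < x) : 0 < quadraticsProd σ x := by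
  have hlin : 0 < σ + 2 / 3 := by linarith
  have hconst : 0 ≤ 15 * σ + 4 := by linarith
  unfold quadraticsProd
  positivity

lemma strictMonoOn_quadraticsProd (hσ : -4 / 15 ≤ σ) :
    StrictMonoOn (quadraticsProd σ) (Ioi 0) := by
  intro x (hx : 0 < x) y _ hxy
  have hlin : 0 < σ + 2 / 3 := by linarith
  unfold quadraticsProd
  gcongr

lemma derivL_add_one_sub_derivL {x : ℝ} (hσ : -4 / 15 ≤ σ) (hx : 0 < x) :
    derivL σ (x + 1) - derivL σ x = fwdDiffDecay σ x - 1 / (x + 1) ^ 2 := by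
  have hQ := (quadraticsProd_pos hσ hx).ne'
  have hQ1 := (quadraticsProd_pos hσ (by linarith : 0 < x + 1)).ne'
  have hx1 : x + 1 ≠ 0 := by linarith
  unfold derivL fwdDiffDecay
  field_simp
  unfold quadraticsProd
  ring

lemma strictAntiOn_fwdDiffDecay (hσ : 16 / 21 ≤ σ) : StrictAntiOn (fwdDiffDecay σ) (Ioi 0) := by
  have hcoeff : 0 ≤ (21 * σ - 16) / 135 := by linarith
  have hσ' : -4 / 15 ≤ σ := by linarith
  have hdecay {x : ℝ} (hx : 0 < x) : fwdDiffDecay σ x =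
      ((21 * σ - 16) / 135 + ((15 * σ + 4) / 45) ^ 2 / (x + 1) ^ 2) /
        (quadraticsProd σ x * quadraticsProd σ (x + 1)) := by
    have hx1 : x + 1 ≠ 0 := by linarith
    rw [fwdDiffDecay, ← div_div, add_div, mul_div_cancel_right₀ _ (pow_ne_zero 2 hx1)]
  intro x (hx : 0 < x) y (hy : 0 < y) hxy
  have hQx := quadraticsProd_pos hσ' hx
  have hQy := quadraticsProd_pos hσ' hy
  have hQx1 := quadraticsProd_pos hσ' (by linarith : 0 < x + 1)
  have hQ := strictMonoOn_quadraticsProd hσ' hx hy hxy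
  have hQ1 := strictMonoOn_quadraticsProd hσ' (show 0 < x + 1 by linarith)
    (show 0 < y + 1 by linarith) (by linarith)
  rw [hdecay hx, hdecay hy]
  gcongr

lemma eventually_fwdDiffDecay_neg (hσ : -4 / 15 ≤ σ) (hσ' : σ < 16 / 21) :
    ∀ᶠ x in atTop, fwdDiffDecay σ x < 0 := by
  have hnum : Tendsto (fun x : ℝ =>
      (21 * σ - 16) / 135 * (x + 1) ^ 2 + ((15 * σ + 4) / 45) ^ 2) atTop atBot := by
    have hsq : Tendsto (fun x : ℝ => (x + 1) ^ 2) atTop atTop :=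
      (tendsto_pow_atTop two_ne_zero).comp (tendsto_atTop_add_const_right _ 1 tendsto_id)
    exact tendsto_atBot_add_const_right _ _ (hsq.const_mul_atTop_of_neg (by linarith))
  filter_upwards [hnum.eventually_lt_atBot 0, eventually_gt_atTop 0] with x hneg hx
  have hQ := quadraticsProd_pos hσ hx
  have hQ1 := quadraticsProd_pos hσ (by linarith : 0 < x + 1)
  exact div_neg_of_neg_of_pos hneg (by positivity)

end QuadraticsProd

section DigammaError

variable {a : ℝ}

lemma hasDerivAt_L {x : ℝ} (ha : 1 / 15 ≤ a) (hx : 0 < x) :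
    HasDerivAt (fun y => L y a) (derivL (sigma a) x) x := by
  have ha0 : 0 < a := by linarith
  have hp : 0 < x ^ 2 + x + (3 * a + 1) / 3 := by positivity
  have hq : 0 < x ^ 2 + x + (15 * a - 1) / (45 * a) :=
    add_pos_of_pos_of_nonneg (by positivity) (div_nonneg (by linarith) (by linarith))
  refine (((hasDerivAt_log_sq_add_self_add hp.ne').const_mul _).add
    ((hasDerivAt_log_sq_add_self_add hq.ne').const_mul _)).congr_deriv ?_
  rw [derivL, quadraticsProd_sigma ha0.ne', div_mul_div_comm, div_mul_div_comm,
    div_add_div _ _ (by positivity) (by positivity), div_eq_div_iff (by positivity) (by positivity),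
    sigma]
  field_simp
  ring

lemma tendsto_L_sub_log (a : ℝ) : Tendsto (fun x => L x a - Real.log x) atTop (𝓝 0) := by
  have hterm := tendsto_log_quadratic_sub_two_mul_log 1
  have hsum := ((hterm ((3 * a + 1) / 3)).const_mul (1 / (90 * a ^ 2 + 2))).add
    ((hterm ((15 * a - 1) / (45 * a))).const_mul (45 * a ^ 2 / (90 * a ^ 2 + 2)))
  simp only [one_mul, mul_zero, add_zero] at hsum
  refine hsum.congr fun x => ?_
  have hweights : 1 / (90 * a ^ 2 + 2) = 1 / 2 - 45 * a ^ 2 / (90 * a ^ 2 + 2) := by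
    field_simp
    ring
  rw [L, hweights]
  ring

lemma tendsto_digammaError (a : ℝ) : Tendsto (digammaError a) atTop (𝓝 0) := by
  simpa using! tendsto_digamma_add_one_sub_log.sub (tendsto_L_sub_log a)

lemma fwdDiff_digammaError {x : ℝ} (a : ℝ) (hx : 0 < x) :
    fwdDiff 1 (digammaError a) x = (x + 1)⁻¹ - (L (x + 1) a - L x a) := by
  rw [fwdDiff, digammaError, digammaError, digamma_add_one_s7 (by linarith)]
  ring

lemma tendsto_fwdDiff_digammaError (a : ℝ) :
    Tendsto (fwdDiff 1 (digammaError a)) atTop (𝓝 0) := by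
  have hshift := (tendsto_digammaError a).comp (tendsto_atTop_add_const_right _ (1 : ℝ) tendsto_id)
  simpa using! hshift.sub (tendsto_digammaError a)

lemma hasDerivAt_fwdDiff_digammaError {x : ℝ} (ha : 1 / 15 ≤ a) (hx : 0 < x) :
    HasDerivAt (fwdDiff 1 (digammaError a)) (-fwdDiffDecay (sigma a) x) x := by
  have hinv : HasDerivAt (fun y : ℝ => (y + 1)⁻¹) (-1 / (x + 1) ^ 2) x :=
    ((hasDerivAt_id x).add_const 1).inv (by simp only [id]; linarith)
  have hL : HasDerivAt (fun y => L (y + 1) a - L y a)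
      (derivL (sigma a) (x + 1) - derivL (sigma a) x) x :=
    ((hasDerivAt_L ha (by linarith)).comp_add_const x 1).sub (hasDerivAt_L ha hx)
  have heq : fwdDiff 1 (digammaError a) =ᶠ[𝓝 x]
      fun y => (y + 1)⁻¹ - (L (y + 1) a - L y a) := by
    filter_upwards [lt_mem_nhds hx] with y hy using fwdDiff_digammaError a hy
  refine ((hinv.sub hL).congr_of_eventuallyEq heq).congr_deriv ?_
  rw [derivL_add_one_sub_derivL (neg_four_div_fifteen_le_sigma ha) hx]
  ring

lemma strictConvexOn_fwdDiff_digammaError (ha : 1 / 15 ≤ a) (hσ : 16 / 21 ≤ sigma a) :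
    StrictConvexOn ℝ (Ioi 0) (fwdDiff 1 (digammaError a)) := by
  refine StrictMonoOn.strictConvexOn_of_deriv (convex_Ioi 0)
    (fun x hx => (hasDerivAt_fwdDiff_digammaError ha hx).continuousAt.continuousWithinAt) ?_
  rw [interior_Ioi]
  exact (strictAntiOn_fwdDiffDecay hσ).neg.congr fun x hx =>
    (hasDerivAt_fwdDiff_digammaError ha hx).deriv.symm

lemma strictConcaveOn_digammaError (ha : 1 / 15 ≤ a) (hσ : 16 / 21 ≤ sigma a) :
    StrictConcaveOn ℝ (Ioi 0) (digammaError a) :=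
  strictConcaveOn_of_strictConvexOn_fwdDiff one_pos (tendsto_digammaError a)
    (strictConvexOn_fwdDiff_digammaError ha hσ)

lemma eventually_fwdDiff_digammaError_neg (ha : 1 / 15 ≤ a) (hσ : sigma a < 16 / 21) :
    ∀ᶠ x in atTop, fwdDiff 1 (digammaError a) x < 0 := by
  obtain ⟨M, hM⟩ := eventually_atTop.1 <| (eventually_ge_atTop 0).and
    (eventually_fwdDiffDecay_neg (neg_four_div_fifteen_le_sigma ha) hσ)
  have hM0 : 0 ≤ M := (hM M le_rfl).1
  have hderiv {x : ℝ} (hx : M < x) := hasDerivAt_fwdDiff_digammaError ha (hM0.trans_lt hx)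
  have hmono : StrictMonoOn (fwdDiff 1 (digammaError a)) (Ioi M) := by
    refine strictMonoOn_of_deriv_pos (convex_Ioi M)
      (fun x hx => (hderiv hx).continuousAt.continuousWithinAt) ?_
    rw [interior_Ioi]
    intro x (hx : M < x)
    rw [(hderiv hx).deriv]
    exact neg_pos.2 (hM x hx.le).2
  filter_upwards [eventually_gt_atTop M] with x hx using
    lt_of_strictMonoOn_Ioi_of_tendsto hmono (tendsto_fwdDiff_digammaError a) hx

lemma le_sigma_of_monotoneOn {M : ℝ} (ha : 1 / 15 ≤ a)
    (hmono : MonotoneOn (digammaError a) (Ioi M)) : 16 / 21 ≤ sigma a := by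
  by_contra! hσ
  obtain ⟨x, hneg, hx⟩ :=
    ((eventually_fwdDiff_digammaError_neg ha hσ).and (eventually_gt_atTop M)).exists
  exact (sub_neg.1 hneg).not_ge (hmono hx (show M < x + 1 by linarith) (by linarith))

end DigammaError

theorem stmt_7_general {a : ℝ} (ha : 1 / 15 ≤ a) :
    [StrictConcaveOn ℝ (Ioi 0) (digammaError a),
      StrictMonoOn (digammaError a) (Ioi 0),
      ∃ M, MonotoneOn (digammaError a) (Ioi M),
      (40 + 3 * Real.sqrt 205) / 105 ≤ a].TFAE := by
  rw [threshold_le_iff_le_sigma (by linarith)]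
  tfae_have 1 → 2 := fun hconc => strictMonoOn_of_strictConcaveOn_of_not_tendsto_atBot hconc
    (not_tendsto_atBot_of_tendsto_nhds (tendsto_digammaError a))
  tfae_have 2 → 3 := fun hmono => ⟨0, hmono.monotoneOn⟩
  tfae_have 3 → 4 := fun ⟨_, hmono⟩ => le_sigma_of_monotoneOn ha hmono
  tfae_have 4 → 1 := strictConcaveOn_digammaError ha
  tfae_finish

/-- For a > 1/15, F_a(x) = ψ(x+1) − L(x,a) is strictly increasing and strictly concave on
(0, ∞) if and only if a ≥ a₁ = (40 + 3√205)/105. -/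
theorem stmt_7 (a : ℝ) (ha : 1 / 15 < a) :
    (StrictMonoOn (fun x : ℝ => digamma (x + 1) - L x a) (Set.Ioi 0) ∧
        StrictConcaveOn ℝ (Set.Ioi 0) (fun x : ℝ => digamma (x + 1) - L x a)) ↔
      (40 + 3 * Real.sqrt 205) / 105 ≤ a := by
  have htfae := stmt_7_general ha.le
  exact ⟨fun h => (htfae.out 1 3).1 h.1, fun h => ⟨(htfae.out 1 3).2 h, (htfae.out 0 3).2 h⟩⟩
end
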